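/- arXiv:1509.05975 — 3 statements merged into one kernel-verified Lean document; each statement's English description precedes it below -/
import Mathlib

section
/- Let H₁ and H₂ be real Hilbert spaces, A, ΔA : H₁ → H₂ bounded linear operators, Ã = A + ΔA, B̃ = Ã*Ã, α > 0, R_α = α·id + B̃. Suppose y ∈ H₁, f, Δf ∈ H₂, Δy_α ∈ H₁ satisfy Ay = f and R_α(y + Δy_α) = Ã*(f + Δf). Then the absolute error of the regularized solution satisfies ‖Δy_α‖ ≤ ‖R_α⁻¹ Ã*‖ · (‖Δf‖ + ‖ΔA‖·‖y‖) + α ‖R_α⁻¹‖ · ‖y‖. -/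
open ContinuousLinearMap

/-!
Since `Ã y = f + ΔA y`, the exact solution satisfies `R_α y = α y + Ã* (f + ΔA y)`. Subtracting this
from the normal equation gives `R_α Δy_α = Ã* (Δf - ΔA y) - α y`; apply `R_α⁻¹` and take norms.
This works with any operator `S` in place of `Ã*`, and `L` below stands for `R_α⁻¹`.
-/

section Algebra

variable {R E F : Type*} [Ring R] [AddCommGroup E] [Module R E] [AddCommGroup F] [Module R F]
  {α : R} {A ΔA : E →ₗ[R] F} {S : F →ₗ[R] E} {y Δy : E} {Δf : F}

theorem regularized_normal_equation_error
    (hreg : α • (y + Δy) + S ((A + ΔA) (y + Δy)) = S (A y + Δf)) :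
    α • Δy + S ((A + ΔA) Δy) = S (Δf - ΔA y) - α • y := by
  have exact_part : S ((A + ΔA) y) = S (A y) + S (ΔA y) := by
    rw [LinearMap.add_apply, map_add]
  rw [smul_add, map_add, map_add, exact_part, map_add] at hreg
  rw [map_sub]
  linear_combination (norm := abel) hreg

theorem regularized_error_eq {L : E →ₗ[R] E} (hL : ∀ x, L (α • x + S ((A + ΔA) x)) = x)
    (hreg : α • (y + Δy) + S ((A + ΔA) (y + Δy)) = S (A y + Δf)) :
    Δy = L (S (Δf - ΔA y)) - α • L y :=
  calc
    Δy = L (α • Δy + S ((A + ΔA) Δy)) := (hL Δy).symm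
    _ = L (S (Δf - ΔA y) - α • y) := by rw [regularized_normal_equation_error hreg]
    _ = L (S (Δf - ΔA y)) - α • L y := by rw [map_sub, map_smul]

end Algebra

theorem tikhonov_absolute_error_bound_general
    {𝕜 E F : Type*} [NontriviallyNormedField 𝕜]
    [SeminormedAddCommGroup E] [NormedSpace 𝕜 E] [SeminormedAddCommGroup F] [NormedSpace 𝕜 F]
    {A ΔA : E →L[𝕜] F} {S : F →L[𝕜] E} {L : E →L[𝕜] E} {α : 𝕜} {y Δy : E} {Δf : F}
    (hL : L.comp (α • ContinuousLinearMap.id 𝕜 E + S.comp (A + ΔA)) = ContinuousLinearMap.id 𝕜 E)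
    (hreg : (α • ContinuousLinearMap.id 𝕜 E + S.comp (A + ΔA)) (y + Δy) = S (A y + Δf)) :
    ‖Δy‖ ≤ ‖L.comp S‖ * (‖Δf‖ + ‖ΔA‖ * ‖y‖) + ‖α‖ * ‖L‖ * ‖y‖ := by
  have error_eq : Δy = L.comp S (Δf - ΔA y) - α • L y :=
    regularized_error_eq (A := A.toLinearMap) (ΔA := ΔA.toLinearMap) (S := S.toLinearMap)
      (L := L.toLinearMap) (DFunLike.congr_fun hL) hreg
  have data_error_le : ‖Δf - ΔA y‖ ≤ ‖Δf‖ + ‖ΔA‖ * ‖y‖ :=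
    norm_sub_le_of_le le_rfl (ΔA.le_opNorm y)
  have regularization_error_le : ‖α • L y‖ ≤ ‖α‖ * ‖L‖ * ‖y‖ := by
    rw [norm_smul, mul_assoc]
    gcongr
    exact L.le_opNorm y
  rw [error_eq]
  exact norm_sub_le_of_le ((L.comp S).le_opNorm_of_le data_error_le) regularization_error_le

/-- Absolute error bound for the Tikhonov-regularized solution:
`‖Δyα‖ ≤ ‖R_α⁻¹ Ã*‖ (‖Δf‖ + ‖ΔA‖‖y‖) + α ‖R_α⁻¹‖ ‖y‖`. -/
theorem tikhonov_absolute_error_bound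
    {H₁ H₂ : Type*}
    [NormedAddCommGroup H₁] [InnerProductSpace ℝ H₁] [CompleteSpace H₁]
    [NormedAddCommGroup H₂] [InnerProductSpace ℝ H₂] [CompleteSpace H₂]
    (A ΔA Atilde : H₁ →L[ℝ] H₂) (hAt : Atilde = A + ΔA)
    (α : ℝ) (hα : 0 < α)
    (Rα Rinv : H₁ →L[ℝ] H₁)
    (hR : Rα = α • ContinuousLinearMap.id ℝ H₁ +
        (ContinuousLinearMap.adjoint Atilde).comp Atilde)
    (hinv₁ : Rα.comp Rinv = ContinuousLinearMap.id ℝ H₁)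
    (hinv₂ : Rinv.comp Rα = ContinuousLinearMap.id ℝ H₁)
    (y Δyα : H₁) (f Δf : H₂)
    (hyf : A y = f)
    (hreg : Rα (y + Δyα) = ContinuousLinearMap.adjoint Atilde (f + Δf)) :
    ‖Δyα‖ ≤ ‖Rinv.comp (ContinuousLinearMap.adjoint Atilde)‖ * (‖Δf‖ + ‖ΔA‖ * ‖y‖)
      + α * ‖Rinv‖ * ‖y‖ := by
  subst hAt hR hyf
  simpa only [Real.norm_of_nonneg hα.le] using tikhonov_absolute_error_bound_general hinv₂ hreg
end

section
/- Let H₁ and H₂ be real Hilbert spaces, A, ΔA : H₁ → H₂ bounded linear operators with A ≠ 0, Ã = A + ΔA, B̃ = Ã*Ã, α > 0, R_α = α·id + B̃. Suppose y ∈ H₁ with y ≠ 0, f, Δf ∈ H₂, Δy_α ∈ H₁ satisfy Ay = f with f ≠ 0 and R_α(y + Δy_α) = Ã*(f + Δf). Then, writing δ_rel = ‖Δf‖/‖f‖ and ξ_rel = ‖ΔA‖/‖A‖, the relative error of the regularized solution satisfies ‖Δy_α‖/‖y‖ ≤ ‖R_α⁻¹ Ã*‖ · ‖A‖ · (δ_rel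 + ξ_rel) + α ‖R_α⁻¹‖. -/
open ContinuousLinearMap

/-!
For a left inverse `L` of `R x = α • x + S (B x)`, the solution `x` of `R x = S g` differs from any
`y` by `x - y = L (S g - R y) = L (S (g - B y)) - α • L y`: the residual `g - B y`, filtered by
`L ∘ S`, minus the bias `α • L y`. For `B = A + ΔA` and `g = A y + Δf` the residual is `Δf - ΔA y`,
and `‖A y‖ ≤ ‖A‖ * ‖y‖` turns the data error relative to `‖A y‖` into one relative to `‖y‖`.
-/

section Algebra

variable {R E F : Type*} [Semiring R] [AddCommGroup E] [Module R E] [AddCommGroup F] [Module R F]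

theorem regularized_solution_sub_eq {B : E → F} {S : F →ₗ[R] E} {L : E →ₗ[R] E} {α : R}
    (hL : Function.LeftInverse L fun x ↦ α • x + S (B x)) {x : E} {g : F}
    (hx : α • x + S (B x) = S g) (y : E) :
    x - y = L (S (g - B y)) - α • L y :=
  calc
    x - y = L (α • x + S (B x)) - L (α • y + S (B y)) := congrArg₂ (· - ·) (hL x).symm (hL y).symm
    _ = L (S g) - L (α • y + S (B y)) := by rw [hx]
    _ = L (S (g - B y)) - α • L y := by
      simp only [map_add, map_sub, map_smul]
      abel

end Algebra

section Normed

variable {𝕜 E F : Type*} [NontriviallyNormedField 𝕜]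
  [SeminormedAddCommGroup E] [NormedSpace 𝕜 E] [SeminormedAddCommGroup F] [NormedSpace 𝕜 F]

theorem norm_regularized_solution_sub_le {B : E → F} {S : F →L[𝕜] E} {L : E →L[𝕜] E} {α : 𝕜}
    (hL : Function.LeftInverse L fun x ↦ α • x + S (B x)) {x : E} {g : F}
    (hx : α • x + S (B x) = S g) (y : E) :
    ‖x - y‖ ≤ ‖L.comp S‖ * ‖g - B y‖ + ‖α‖ * ‖L‖ * ‖y‖ :=
  calc
    ‖x - y‖ = ‖L.comp S (g - B y) - α • L y‖ :=
      congrArg norm (regularized_solution_sub_eq (S := S.toLinearMap) (L := L.toLinearMap) hL hx y)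
    _ ≤ ‖L.comp S (g - B y)‖ + ‖α • L y‖ := norm_sub_le _ _
    _ ≤ ‖L.comp S‖ * ‖g - B y‖ + ‖α‖ * ‖L‖ * ‖y‖ :=
      add_le_add (le_opNorm _ _) (((α • L).le_opNorm y).trans (by grw [norm_smul_le]))

theorem norm_perturbed_residual_le (A ΔA : E →L[𝕜] F) {y : E} (hAy : 0 < ‖A y‖) (Δf : F) :
    ‖A y + Δf - (A + ΔA) y‖ ≤ ‖A‖ * (‖Δf‖ / ‖A y‖ + ‖ΔA‖ / ‖A‖) * ‖y‖ := by
  have hA : ‖A‖ ≠ 0 := left_ne_zero_of_mul (hAy.trans_le (A.le_opNorm y)).ne'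
  calc
    ‖A y + Δf - (A + ΔA) y‖ = ‖Δf - ΔA y‖ := by rw [add_apply, add_sub_add_left_eq_sub]
    _ ≤ ‖Δf‖ + ‖ΔA y‖ := norm_sub_le _ _
    _ = ‖A y‖ * (‖Δf‖ / ‖A y‖) + ‖ΔA y‖ := by rw [mul_div_cancel₀ _ hAy.ne']
    _ ≤ ‖A‖ * ‖y‖ * (‖Δf‖ / ‖A y‖) + ‖ΔA‖ * ‖y‖ := by gcongr <;> exact le_opNorm _ _
    _ = ‖A‖ * (‖Δf‖ / ‖A y‖ + ‖ΔA‖ / ‖A‖) * ‖y‖ := by field_simp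

theorem tikhonov_relative_error_bound_general (A ΔA : E →L[𝕜] F) (S : F →L[𝕜] E) (α : 𝕜)
    (L : E →L[𝕜] E)
    (hL : L.comp (α • ContinuousLinearMap.id 𝕜 E + S.comp (A + ΔA)) = ContinuousLinearMap.id 𝕜 E)
    {y Δy : E} {f Δf : F} (hf : 0 < ‖f‖) (hyf : A y = f)
    (hreg : (α • ContinuousLinearMap.id 𝕜 E + S.comp (A + ΔA)) (y + Δy) = S (f + Δf)) :
    ‖Δy‖ / ‖y‖ ≤ ‖L.comp S‖ * ‖A‖ * (‖Δf‖ / ‖f‖ + ‖ΔA‖ / ‖A‖) + ‖α‖ * ‖L‖ := by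
  subst hyf
  have hy : 0 < ‖y‖ := pos_of_mul_pos_right (hf.trans_le (A.le_opNorm y)) (norm_nonneg A)
  rw [div_le_iff₀ hy]
  calc
    ‖Δy‖ = ‖y + Δy - y‖ := by rw [add_sub_cancel_left]
    _ ≤ ‖L.comp S‖ * ‖A y + Δf - (A + ΔA) y‖ + ‖α‖ * ‖L‖ * ‖y‖ :=
      norm_regularized_solution_sub_le (B := A + ΔA) (S := S) (DFunLike.congr_fun hL) hreg y
    _ ≤ ‖L.comp S‖ * (‖A‖ * (‖Δf‖ / ‖A y‖ + ‖ΔA‖ / ‖A‖) * ‖y‖) + ‖α‖ * ‖L‖ * ‖y‖ := by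
      grw [norm_perturbed_residual_le A ΔA hf Δf]
    _ = (‖L.comp S‖ * ‖A‖ * (‖Δf‖ / ‖A y‖ + ‖ΔA‖ / ‖A‖) + ‖α‖ * ‖L‖) * ‖y‖ := by ring

end Normed

/-- Relative error bound for the Tikhonov-regularized solution:
`‖Δyα‖/‖y‖ ≤ ‖R_α⁻¹ Ã*‖ ‖A‖ (δ_rel + ξ_rel) + α ‖R_α⁻¹‖`, where `δ_rel = ‖Δf‖/‖f‖`
and `ξ_rel = ‖ΔA‖/‖A‖`. -/
theorem tikhonov_relative_error_bound
    {H₁ H₂ : Type*}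
    [NormedAddCommGroup H₁] [InnerProductSpace ℝ H₁] [CompleteSpace H₁]
    [NormedAddCommGroup H₂] [InnerProductSpace ℝ H₂] [CompleteSpace H₂]
    (A ΔA Atilde : H₁ →L[ℝ] H₂) (hA0 : A ≠ 0) (hAt : Atilde = A + ΔA)
    (α : ℝ) (hα : 0 < α)
    (Rα Rinv : H₁ →L[ℝ] H₁)
    (hR : Rα = α • ContinuousLinearMap.id ℝ H₁ +
        (ContinuousLinearMap.adjoint Atilde).comp Atilde)
    (hinv₁ : Rα.comp Rinv = ContinuousLinearMap.id ℝ H₁)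
    (hinv₂ : Rinv.comp Rα = ContinuousLinearMap.id ℝ H₁)
    (y Δyα : H₁) (f Δf : H₂)
    (hy0 : y ≠ 0) (hf0 : f ≠ 0)
    (hyf : A y = f)
    (hreg : Rα (y + Δyα) = ContinuousLinearMap.adjoint Atilde (f + Δf)) :
    ‖Δyα‖ / ‖y‖ ≤
      ‖Rinv.comp (ContinuousLinearMap.adjoint Atilde)‖ * ‖A‖ * (‖Δf‖ / ‖f‖ + ‖ΔA‖ / ‖A‖)
      + α * ‖Rinv‖ := by
  subst hAt hR
  simpa only [Real.norm_of_nonneg hα.le] using tikhonov_relative_error_bound_general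
    A ΔA (adjoint (A + ΔA)) α Rinv hinv₂ (norm_pos_iff.mpr hf0) hyf hreg
end

section
/- Let c > 0, η > 0, g > 0 and ε(α) = cη/(2√α) + α/(α + g) for α > 0. If cη/√g < 3√3/4, then the derivative ε′ has exactly two zeros 0 < α₁ < α₂ in (0, ∞), with ε′ < 0 on (0, α₁), ε′ > 0 on (α₁, α₂) and ε′ < 0 on (α₂, ∞); in particular ε attains a strict local minimum at α₁ (and a strict local maximum at α₂), so ε has a unique local minimum point on (0, ∞). -/
open Set

open Filter Topology

/-!
Write `k = cη`. At `α > 0` the derivative of the envelope is `(φ(α) - k) / (4α√α)` with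
`φ(α) = 4gα√α / (α + g)²`, so its sign is that of `φ - k`. The function `φ` does not involve `k`,
vanishes at `0` and at infinity, increases strictly up to `3g` and decreases strictly afterwards,
and `φ(3g) = (3√3/4)√g`. Condition (10) says exactly that the level `k` lies below this peak, so
`φ` crosses it once on each side of `3g`, upwards at `α₁` and downwards at `α₂`.
-/

section LocalExtr

variable {X β : Type*} [TopologicalSpace X] [Preorder β] {f : X → β} {a : X}

lemma isLocalMin_of_eventually_nhdsNE_lt (h : ∀ᶠ x in 𝓝[≠] a, f a < f x) : IsLocalMin f a := by
  rw [IsLocalMin, IsMinFilter, ← pure_sup_nhdsNE a, eventually_sup]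
  exact ⟨le_rfl, h.mono fun _ => le_of_lt⟩

lemma isLocalMax_of_eventually_nhdsNE_lt (h : ∀ᶠ x in 𝓝[≠] a, f x < f a) : IsLocalMax f a :=
  isLocalMin_of_eventually_nhdsNE_lt (β := βᵒᵈ) h

lemma not_isLocalMin_of_eventually_nhdsNE_lt [(𝓝[≠] a).NeBot]
    (h : ∀ᶠ x in 𝓝[≠] a, f x < f a) : ¬IsLocalMin f a := fun hmin =>
  have ⟨_, hlt, hle⟩ := (h.and (hmin.filter_mono nhdsWithin_le_nhds)).exists
  hlt.not_ge hle

end LocalExtr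

section DerivativeTest

variable {f : ℝ → ℝ} {l m r : ℝ}

lemma eventually_nhdsNE_lt_of_deriv_Ioo (hlm : l < m) (hmr : m < r) (hf : ContinuousAt f m)
    (hneg : ∀ x ∈ Ioo l m, deriv f x < 0) (hpos : ∀ x ∈ Ioo m r, 0 < deriv f x) :
    ∀ᶠ x in 𝓝[≠] m, f m < f x := by
  have hcont : ContinuousOn f (Ioo l r) := by
    intro x hx
    refine ContinuousAt.continuousWithinAt ?_
    rcases lt_trichotomy x m with hxm | rfl | hmx
    · exact (differentiableAt_of_deriv_ne_zero (hneg x ⟨hx.1, hxm⟩).ne).continuousAt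
    · exact hf
    · exact (differentiableAt_of_deriv_ne_zero (hpos x ⟨hmx, hx.2⟩).ne').continuousAt
  have hanti : StrictAntiOn f (Ioc l m) :=
    strictAntiOn_of_deriv_neg (convex_Ioc l m) (hcont.mono (Ioc_subset_Ioo_right hmr))
      (by rwa [interior_Ioc])
  have hmono : StrictMonoOn f (Ico m r) :=
    strictMonoOn_of_deriv_pos (convex_Ico m r) (hcont.mono (Ico_subset_Ioo_left hlm))
      (by rwa [interior_Ico])
  filter_upwards [nhdsWithin_le_nhds (Ioo_mem_nhds hlm hmr), self_mem_nhdsWithin] with x hx hne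
  rcases lt_or_gt_of_ne hne with hxm | hmx
  · exact hanti ⟨hx.1, hxm.le⟩ ⟨hlm, le_rfl⟩ hxm
  · exact hmono ⟨le_rfl, hmr⟩ ⟨hmx.le, hx.2⟩ hmx

lemma eventually_nhdsNE_gt_of_deriv_Ioo (hlm : l < m) (hmr : m < r) (hf : ContinuousAt f m)
    (hpos : ∀ x ∈ Ioo l m, 0 < deriv f x) (hneg : ∀ x ∈ Ioo m r, deriv f x < 0) :
    ∀ᶠ x in 𝓝[≠] m, f x < f m := by
  have hmin : ∀ᶠ x in 𝓝[≠] m, (-f) m < (-f) x :=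
    eventually_nhdsNE_lt_of_deriv_Ioo hlm hmr hf.neg
      (fun x hx => by simpa only [deriv.neg, neg_lt_zero] using hpos x hx)
      (fun x hx => by simpa only [deriv.neg, neg_pos] using hneg x hx)
  exact hmin.mono fun _ => neg_lt_neg_iff.mp

end DerivativeTest

lemma exists_crossings_of_strictMonoOn_of_strictAntiOn {X β : Type*}
    [ConditionallyCompleteLinearOrder X] [DenselyOrdered X] [TopologicalSpace X] [OrderTopology X]
    [LinearOrder β] [TopologicalSpace β] [OrderClosedTopology β]
    {f : X → β} {a m b : X} {k : β} (ham : a ≤ m) (hmb : m ≤ b)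
    (hcont : ContinuousOn f (Icc a b)) (hmono : StrictMonoOn f (Icc a m))
    (hanti : StrictAntiOn f (Ici m)) (hak : f a < k) (hkm : k < f m) (hbk : f b < k) :
    ∃ x₁ x₂, a < x₁ ∧ x₁ < x₂ ∧ (∀ x, a ≤ x → (f x = k ↔ x = x₁ ∨ x = x₂)) ∧
      (∀ x ∈ Ico a x₁, f x < k) ∧ (∀ x ∈ Ioo x₁ x₂, k < f x) ∧ (∀ x ∈ Ioi x₂, f x < k) := by
  obtain ⟨x₁, ⟨hax₁, hx₁m⟩, hx₁⟩ :=
    intermediate_value_Ioo ham (hcont.mono (Icc_subset_Icc_right hmb)) ⟨hak, hkm⟩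
  obtain ⟨x₂, ⟨hmx₂, -⟩, hx₂⟩ :=
    intermediate_value_Ioo' hmb (hcont.mono (Icc_subset_Icc_left ham)) ⟨hbk, hkm⟩
  have hleft : ∀ x ∈ Ico a x₁, f x < k := fun x hx =>
    hx₁ ▸ hmono ⟨hx.1, (hx.2.trans hx₁m).le⟩ ⟨hax₁.le, hx₁m.le⟩ hx.2
  have hmid : ∀ x ∈ Ioo x₁ x₂, k < f x := fun x hx => by
    rcases le_total x m with hxm | hmx
    · exact hx₁ ▸ hmono ⟨hax₁.le, hx₁m.le⟩ ⟨(hax₁.trans hx.1).le, hxm⟩ hx.1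
    · exact hx₂ ▸ hanti hmx hmx₂.le hx.2
  have hright : ∀ x ∈ Ioi x₂, f x < k := fun x hx =>
    hx₂ ▸ hanti hmx₂.le (hmx₂.trans hx).le hx
  refine ⟨x₁, x₂, hax₁, hx₁m.trans hmx₂, fun x hax => ⟨fun hx => ?_, ?_⟩, hleft, hmid, hright⟩
  · by_contra! hne
    rcases hne.1.lt_or_gt with h₁ | h₁
    · exact (hleft x ⟨hax, h₁⟩).ne hx
    rcases hne.2.lt_or_gt with h₂ | h₂
    · exact (hmid x ⟨h₁, h₂⟩).ne' hx
    · exact (hright x h₂).ne hx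
  · rintro (rfl | rfl) <;> assumption

/-- The error envelope `ε(α) = k/(2√α) + α/(α + g)`, meaningful for `α > 0`; the constants `c` and
`η` enter only through the product `k = cη`. -/
noncomputable def errorEnvelope (k g α : ℝ) : ℝ :=
  k / (2 * √α) + α / (α + g)

/-- For `α > 0`, the value of `k` for which `α` is a critical point of `errorEnvelope k g`, obtained
by solving `ε′(α) = 0` for `k`. -/
noncomputable def criticalLevel (g α : ℝ) : ℝ :=
  4 * g * (α * √α) / (α + g) ^ 2

section CriticalLevel

variable {g : ℝ}

lemma criticalLevel_zero_right (g : ℝ) : criticalLevel g 0 = 0 := by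
  simp [criticalLevel]

lemma criticalLevel_three_mul (hg : 0 < g) : criticalLevel g (3 * g) = 3 * √3 / 4 * √g := by
  rw [criticalLevel, Real.sqrt_mul zero_le_three]
  field_simp
  norm_num

lemma continuousOn_criticalLevel (hg : 0 < g) : ContinuousOn (criticalLevel g) (Ici 0) := by
  have hden : ∀ α ∈ Ici (0 : ℝ), (α + g) ^ 2 ≠ 0 := fun α hα => by
    have : 0 ≤ α := hα
    positivity
  unfold criticalLevel
  fun_prop (disch := assumption)

lemma hasDerivAt_criticalLevel (hg : 0 < g) {α : ℝ} (hα : 0 < α) :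
    HasDerivAt (criticalLevel g) (2 * g * √α * (3 * g - α) / (α + g) ^ 3) α := by
  have hnum := ((hasDerivAt_id' α).mul (Real.hasDerivAt_sqrt hα.ne')).const_mul (4 * g)
  have hden := ((hasDerivAt_id' α).add_const g).pow 2
  refine (hnum.div hden (pow_ne_zero 2 (by positivity))).congr_deriv ?_
  have hsq : √α ^ 2 = α := Real.sq_sqrt hα.le
  simp only [Pi.mul_apply, Pi.pow_apply]
  field_simp
  rw [hsq]
  ring

lemma strictMonoOn_criticalLevel (hg : 0 < g) :
    StrictMonoOn (criticalLevel g) (Icc 0 (3 * g)) := by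
  refine strictMonoOn_of_deriv_pos (convex_Icc _ _)
    ((continuousOn_criticalLevel hg).mono Icc_subset_Ici_self) fun α hα => ?_
  rw [interior_Icc] at hα
  obtain ⟨hα₀, hα₃⟩ := hα
  rw [(hasDerivAt_criticalLevel hg hα₀).deriv]
  have : 0 < 3 * g - α := sub_pos.mpr hα₃
  positivity

lemma strictAntiOn_criticalLevel (hg : 0 < g) :
    StrictAntiOn (criticalLevel g) (Ici (3 * g)) := by
  have hg₃ : 0 < 3 * g := by positivity
  refine strictAntiOn_of_deriv_neg (convex_Ici _)
    ((continuousOn_criticalLevel hg).mono (Ici_subset_Ici.mpr hg₃.le)) fun α hα => ?_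
  rw [interior_Ici] at hα
  have hα₀ : 0 < α := hg₃.trans hα
  rw [(hasDerivAt_criticalLevel hg hα₀).deriv]
  exact div_neg_of_neg_of_pos (mul_neg_of_pos_of_neg (by positivity) (sub_neg.mpr hα))
    (by positivity)

lemma criticalLevel_le_div_sqrt (hg : 0 ≤ g) {α : ℝ} (hα : 0 < α) :
    criticalLevel g α ≤ 4 * g / √α := by
  calc criticalLevel g α ≤ 4 * g * (α * √α) / α ^ 2 := by
        unfold criticalLevel
        gcongr
        exact le_add_of_nonneg_right hg
    _ = 4 * g / √α := by
        have hsq : √α ^ 2 = α := Real.sq_sqrt hα.le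
        field_simp
        rw [hsq]

lemma tendsto_criticalLevel_atTop (hg : 0 ≤ g) : Tendsto (criticalLevel g) atTop (𝓝 0) := by
  refine tendsto_of_tendsto_of_tendsto_of_le_of_le' tendsto_const_nhds
    (Real.tendsto_sqrt_atTop.const_div_atTop (4 * g)) ?_ ?_
  · filter_upwards [eventually_ge_atTop 0] with α hα
    unfold criticalLevel
    positivity
  · filter_upwards [eventually_gt_atTop 0] with α hα using criticalLevel_le_div_sqrt hg hα

lemma exists_criticalLevel_crossings (hg : 0 < g) {k : ℝ} (hk : 0 < k)
    (hkg : k < 3 * √3 / 4 * √g) :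
    ∃ α₁ α₂, 0 < α₁ ∧ α₁ < α₂ ∧
      (∀ α, 0 ≤ α → (criticalLevel g α = k ↔ α = α₁ ∨ α = α₂)) ∧
      (∀ α ∈ Ico 0 α₁, criticalLevel g α < k) ∧ (∀ α ∈ Ioo α₁ α₂, k < criticalLevel g α) ∧
      (∀ α ∈ Ioi α₂, criticalLevel g α < k) := by
  obtain ⟨b, hbk, hb⟩ := (((tendsto_criticalLevel_atTop hg.le).eventually_lt_const hk).and
    (eventually_ge_atTop (3 * g))).exists
  exact exists_crossings_of_strictMonoOn_of_strictAntiOn (by positivity) hb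
    ((continuousOn_criticalLevel hg).mono Icc_subset_Ici_self) (strictMonoOn_criticalLevel hg)
    (strictAntiOn_criticalLevel hg) (by rwa [criticalLevel_zero_right])
    (by rwa [criticalLevel_three_mul hg]) hbk

end CriticalLevel

section ErrorEnvelope

variable {k g α : ℝ}

lemma hasDerivAt_errorEnvelope (k : ℝ) (hg : 0 < g) (hα : 0 < α) :
    HasDerivAt (errorEnvelope k g) ((criticalLevel g α - k) / (4 * (α * √α))) α := by
  have hnoise := (hasDerivAt_const α k).div ((Real.hasDerivAt_sqrt hα.ne').const_mul 2)
    (by positivity)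
  have hbias := (hasDerivAt_id' α).div ((hasDerivAt_id' α).add_const g) (by positivity)
  refine (hnoise.add hbias).congr_deriv ?_
  have hsq : √α ^ 2 = α := Real.sq_sqrt hα.le
  unfold criticalLevel
  field_simp
  linear_combination 4 * k * (α + g) ^ 2 * hsq

lemma deriv_errorEnvelope_eq_zero_iff (hg : 0 < g) (hα : 0 < α) :
    deriv (errorEnvelope k g) α = 0 ↔ criticalLevel g α = k := by
  have hden : 4 * (α * √α) ≠ 0 := by positivity
  rw [(hasDerivAt_errorEnvelope k hg hα).deriv, div_eq_zero_iff, or_iff_left hden, sub_eq_zero]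

lemma deriv_errorEnvelope_neg_iff (hg : 0 < g) (hα : 0 < α) :
    deriv (errorEnvelope k g) α < 0 ↔ criticalLevel g α < k := by
  have hden : 0 < 4 * (α * √α) := by positivity
  rw [(hasDerivAt_errorEnvelope k hg hα).deriv, div_lt_iff₀ hden, zero_mul, sub_neg]

lemma deriv_errorEnvelope_pos_iff (hg : 0 < g) (hα : 0 < α) :
    0 < deriv (errorEnvelope k g) α ↔ k < criticalLevel g α := by
  have hden : 0 < 4 * (α * √α) := by positivity
  rw [(hasDerivAt_errorEnvelope k hg hα).deriv, div_pos_iff_of_pos_right hden, sub_pos]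

end ErrorEnvelope

/-- Under condition (10) of the paper, `cη/√g < 3√3/4`, the derivative of the error envelope
`ε(α) = cη/(2√α) + α/(α + g)` has exactly two zeros `0 < α₁ < α₂`, with `ε′ < 0` on `(0, α₁)`,
`ε′ > 0` on `(α₁, α₂)`, `ε′ < 0` on `(α₂, ∞)`; hence `ε` has a strict local minimum at `α₁`,
a strict local maximum at `α₂`, and `α₁` is the unique local minimum point on `(0, ∞)`. -/
theorem error_envelope_unique_minimum
    (c η g : ℝ) (hc : 0 < c) (hη : 0 < η) (hg : 0 < g)
    (hcond : c * η / Real.sqrt g < 3 * Real.sqrt 3 / 4) :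
    ∃ α₁ α₂ : ℝ, 0 < α₁ ∧ α₁ < α₂ ∧
      (∀ α : ℝ, 0 < α →
        (deriv (fun a : ℝ => c * η / (2 * Real.sqrt a) + a / (a + g)) α = 0 ↔
          α = α₁ ∨ α = α₂)) ∧
      (∀ α ∈ Ioo (0 : ℝ) α₁,
        deriv (fun a : ℝ => c * η / (2 * Real.sqrt a) + a / (a + g)) α < 0) ∧
      (∀ α ∈ Ioo α₁ α₂,
        0 < deriv (fun a : ℝ => c * η / (2 * Real.sqrt a) + a / (a + g)) α) ∧
      (∀ α ∈ Ioi α₂,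
        deriv (fun a : ℝ => c * η / (2 * Real.sqrt a) + a / (a + g)) α < 0) ∧
      IsLocalMin (fun a : ℝ => c * η / (2 * Real.sqrt a) + a / (a + g)) α₁ ∧
      (∀ᶠ x in nhdsWithin α₁ {α₁}ᶜ,
        (fun a : ℝ => c * η / (2 * Real.sqrt a) + a / (a + g)) α₁ <
          (fun a : ℝ => c * η / (2 * Real.sqrt a) + a / (a + g)) x) ∧
      IsLocalMax (fun a : ℝ => c * η / (2 * Real.sqrt a) + a / (a + g)) α₂ ∧
      (∀ᶠ x in nhdsWithin α₂ {α₂}ᶜ,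
        (fun a : ℝ => c * η / (2 * Real.sqrt a) + a / (a + g)) x <
          (fun a : ℝ => c * η / (2 * Real.sqrt a) + a / (a + g)) α₂) ∧
      (∀ α : ℝ, 0 < α →
        IsLocalMin (fun a : ℝ => c * η / (2 * Real.sqrt a) + a / (a + g)) α → α = α₁) := by
  have hk : c * η < 3 * √3 / 4 * √g := (div_lt_iff₀ (Real.sqrt_pos.mpr hg)).mp hcond
  obtain ⟨α₁, α₂, hα₁, hα₁₂, heq, hleft, hmid, hright⟩ :=
    exists_criticalLevel_crossings hg (mul_pos hc hη) hk
  have hα₂ : 0 < α₂ := hα₁.trans hα₁₂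
  have hcont {α : ℝ} (hα : 0 < α) : ContinuousAt (errorEnvelope (c * η) g) α :=
    (hasDerivAt_errorEnvelope (c * η) hg hα).continuousAt
  have hzero : ∀ α, 0 < α → (deriv (errorEnvelope (c * η) g) α = 0 ↔ α = α₁ ∨ α = α₂) :=
    fun α hα => (deriv_errorEnvelope_eq_zero_iff hg hα).trans (heq α hα.le)
  have hneg₁ : ∀ α ∈ Ioo 0 α₁, deriv (errorEnvelope (c * η) g) α < 0 := fun α hα =>
    (deriv_errorEnvelope_neg_iff hg hα.1).mpr (hleft α (Ioo_subset_Ico_self hα))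
  have hpos : ∀ α ∈ Ioo α₁ α₂, 0 < deriv (errorEnvelope (c * η) g) α := fun α hα =>
    (deriv_errorEnvelope_pos_iff hg (hα₁.trans hα.1)).mpr (hmid α hα)
  have hneg₂ : ∀ α ∈ Ioi α₂, deriv (errorEnvelope (c * η) g) α < 0 := fun α hα =>
    (deriv_errorEnvelope_neg_iff hg (hα₂.trans hα)).mpr (hright α hα)
  have hmin := eventually_nhdsNE_lt_of_deriv_Ioo hα₁ hα₁₂ (hcont hα₁) hneg₁ hpos
  have hmax := eventually_nhdsNE_gt_of_deriv_Ioo hα₁₂ (lt_add_one α₂) (hcont hα₂) hpos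
    fun α hα => hneg₂ α hα.1
  exact ⟨α₁, α₂, hα₁, hα₁₂, hzero, hneg₁, hpos, hneg₂, isLocalMin_of_eventually_nhdsNE_lt hmin,
    hmin, isLocalMax_of_eventually_nhdsNE_lt hmax, hmax, fun α hα hlocal =>
      ((hzero α hα).mp hlocal.deriv_eq_zero).resolve_right fun h =>
        not_isLocalMin_of_eventually_nhdsNE_lt hmax (h ▸ hlocal)⟩
end
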